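/- Let d ≥ 1 be an integer, and for each a > 0 let w(a) be the weight sequence w_n(a) = 1 + a/n for n ≥ 1. Then the family (B_{w(λ₁)} × ⋯ × B_{w(λ_d)})_{λ∈(0,∞)^d} admits a common hypercyclic algebra on ℓ1(ℕ)^d for the convolution product. -/

import Mathlib

open scoped ENNReal
open Finset

noncomputable section

/-- The space `ℓᵖ(ℕ)` of `p`-summable complex sequences. -/
abbrev lpC (p : ℝ≥0∞) : Type := lp (fun _ : ℕ => ℂ) p

/-- `T` is the product operator `B_{w(lam 0)} × ⋯ × B_{w(lam (d-1))}` of weighted backward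
shifts, the weight sequence of the `i`-th factor being `(w (lam i) n)_{n ≥ 1}`. -/
def IsProductShift (p : ℝ≥0∞) [Fact (1 ≤ p)] (d : ℕ) (w : ℝ → ℕ → ℝ)
    (T : (Fin d → lpC p) →L[ℂ] (Fin d → lpC p)) (lam : Fin d → ℝ) : Prop :=
  ∀ (v : Fin d → lpC p) (i : Fin d) (n : ℕ),
    (T v) i n = (w (lam i) (n + 1) : ℂ) * v i (n + 1)

/-- The family `T lam`, `lam ∈ S`, admits a common hypercyclic algebra for the coordinatewise
product: there is a non-unital subalgebra `A ≠ {0}` of `(ℓᵖ(ℕ))^d` (closed under addition,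
scalar multiplication and the componentwise coordinatewise product) every nonzero element of
which is a common hypercyclic vector for the family. -/
def CommonHypercyclicAlgebraCW (p : ℝ≥0∞) [Fact (1 ≤ p)] (d : ℕ) (S : Set (Fin d → ℝ))
    (T : (Fin d → ℝ) → ((Fin d → lpC p) →L[ℂ] (Fin d → lpC p))) : Prop :=
  ∃ A : Set (Fin d → lpC p),
    (0 : Fin d → lpC p) ∈ A ∧
    (∀ x ∈ A, ∀ y ∈ A, x + y ∈ A) ∧
    (∀ (c : ℂ), ∀ x ∈ A, c • x ∈ A) ∧
    (∀ x ∈ A, ∀ y ∈ A, ∃ z ∈ A, ∀ (i : Fin d) (n : ℕ), z i n = x i n * y i n) ∧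
    (∃ x ∈ A, x ≠ 0) ∧
    (∀ x ∈ A, x ≠ 0 → ∀ lam ∈ S, Dense (Set.range fun n : ℕ => ((T lam) ^ (n + 1)) x))

/-- The family `T lam`, `lam ∈ S`, admits a common hypercyclic algebra on `(ℓ¹(ℕ))^d` for the
(componentwise) convolution product. -/
def CommonHypercyclicAlgebraConv (d : ℕ) (S : Set (Fin d → ℝ))
    (T : (Fin d → ℝ) → ((Fin d → lpC 1) →L[ℂ] (Fin d → lpC 1))) : Prop :=
  ∃ A : Set (Fin d → lpC 1),
    (0 : Fin d → lpC 1) ∈ A ∧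
    (∀ x ∈ A, ∀ y ∈ A, x + y ∈ A) ∧
    (∀ (c : ℂ), ∀ x ∈ A, c • x ∈ A) ∧
    (∀ x ∈ A, ∀ y ∈ A, ∃ z ∈ A, ∀ (i : Fin d) (n : ℕ),
        z i n = ∑ k ∈ Finset.range (n + 1), x i k * y i (n - k)) ∧
    (∃ x ∈ A, x ≠ 0) ∧
    (∀ x ∈ A, x ≠ 0 → ∀ lam ∈ S, Dense (Set.range fun n : ℕ => ((T lam) ^ (n + 1)) x))

/-!
By a Baire category argument it suffices, for parameters `λ` in a box `[α, β)^d`, a fixed degree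
`m + 1` and a target `v`, to perturb a given `u₀` slightly into some `u` such that, for all `λ` and
all monic `P` of that degree, some iterate of the product shift maps `P(u)` close to `v`. The
algebra is then that of the vectors `P(u)` with `P(0) = 0`, for one generic `u`.

Take `u = u₀ + X ^ s * (ε + c Y)`, with `c` normalized so that `u ^ (m + 1)` contains
`X ^ ((m + 1) s) * Y`. When `s` is large, the lower powers of `u` and the terms involving `u₀` sit
in low degree and are killed by the shift. `Y` is a sum of `q ^ d` widely spaced blocks, one for
each point `μ` of a grid of mesh of order `1 / q` in the box: the `N`-th iterate for `λ = μ`, where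
`N` is the position of the block, maps that block to `v`. Since `w_1(a) ⋯ w_N(a)` grows like a
power of `N`, spacings polynomial in `q` make the blocks so small that all later terms are
negligible. Replacing `μ` by a nearby `λ` changes the product of the weights by a factor
`exp (O(log N / q))`, which tends to `1` because `log N = O(log q)`.
-/

section Baire

open Filter Topology TopologicalSpace

theorem eventually_residual_forall_exists_dist_lt {X Y Γ κ : Type*} [TopologicalSpace X]
    [PseudoMetricSpace Y] (f : Γ → κ → X → Y) {S : Set Γ} (v : Y) {δ : ℝ} (hδ : 0 < δ)
    (hf : ∀ N, Equicontinuous fun γ : S => f γ N)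
    (hS : Dense {u | ∃ F : Finset κ, ∀ γ ∈ S, ∃ N ∈ F, dist (f γ N u) v < δ / 2}) :
    ∀ᶠ u in residual X, ∀ γ ∈ S, ∃ N, dist (f γ N u) v < δ := by
  have hsub : {u | ∃ F : Finset κ, ∀ γ ∈ S, ∃ N ∈ F, dist (f γ N u) v < δ / 2} ⊆
      interior {u | ∀ γ ∈ S, ∃ N, dist (f γ N u) v < δ} := by
    rintro u ⟨F, hF⟩
    have hclose : ∀ᶠ x in 𝓝 u, ∀ N ∈ F, ∀ γ : S, dist (f γ N u) (f γ N x) < δ / 2 :=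
      (Finset.eventually_all F).2 fun N _ =>
        Metric.equicontinuousAt_iff_right.1 (hf N u) _ (half_pos hδ)
    refine mem_interior_iff_mem_nhds.2 (hclose.mono fun x hx γ hγ => ?_)
    obtain ⟨N, hN, hlt⟩ := hF γ hγ
    refine ⟨N, (dist_triangle_left _ _ (f γ N u)).trans_lt ?_⟩
    linarith [hx N hN ⟨γ, hγ⟩]
  exact mem_of_superset (residual_of_dense_open isOpen_interior (hS.mono hsub)) interior_subset

theorem eventually_residual_forall_denseRange {X Y Γ κ ι : Type*} [TopologicalSpace X]
    [PseudoMetricSpace Y] [SeparableSpace Y] [Countable ι] (f : Γ → κ → X → Y) (S : ι → Set Γ)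
    (hf : ∀ i N, Equicontinuous fun γ : S i => f γ N)
    (hS : ∀ i v, ∀ δ > 0,
      Dense {u | ∃ F : Finset κ, ∀ γ ∈ S i, ∃ N ∈ F, dist (f γ N u) v < δ}) :
    ∀ᶠ u in residual X, ∀ i, ∀ γ ∈ S i, DenseRange fun N => f γ N u := by
  rcases isEmpty_or_nonempty Y with hY | hY
  · exact .of_forall fun u i γ _ => fun y => hY.elim y
  have hgeneric : ∀ᶠ u in residual X, ∀ i, ∀ n k : ℕ, ∀ γ ∈ S i, ∃ N,
      dist (f γ N u) (denseSeq Y n) < 1 / (k + 1 : ℝ) := by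
    simp only [eventually_countable_forall]
    exact fun i n k => eventually_residual_forall_exists_dist_lt f _ Nat.one_div_pos_of_nat
      (hf i) (hS i _ _ (half_pos Nat.one_div_pos_of_nat))
  filter_upwards [hgeneric] with u hu i γ hγ
  refine Metric.denseRange_iff.2 fun y r hr => ?_
  obtain ⟨k, hk⟩ := exists_nat_one_div_lt (half_pos hr)
  obtain ⟨n, hn⟩ := Metric.denseRange_iff.1 (denseRange_denseSeq Y) y (r / 2) (half_pos hr)
  obtain ⟨N, hN⟩ := hu i n k γ hγ
  refine ⟨N, (dist_triangle_right _ _ (denseSeq Y n)).trans_lt ?_⟩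
  linarith

end Baire

section PolynomialCalculus

open Polynomial Topology Filter

theorem equicontinuous_clm_aeval {𝕜 A E κ : Type*} [NontriviallyNormedField 𝕜] [NormedRing A]
    [NormedAlgebra 𝕜 A] [SeminormedAddCommGroup E] [NormedSpace 𝕜 E] {L : κ → A →L[𝕜] E}
    {P : κ → 𝕜[X]} {C R : ℝ} {m : ℕ} (hL : ∀ k, ‖L k‖ ≤ C) (hdeg : ∀ k, (P k).natDegree ≤ m)
    (hcoeff : ∀ k i, ‖(P k).coeff i‖ ≤ R) :
    Equicontinuous fun k u => L k (aeval u (P k)) := by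
  intro w
  refine Metric.equicontinuousAt_of_continuity_modulus
    (fun u => C * ∑ i ∈ range (m + 1), R * ‖w ^ i - u ^ i‖) ?_ _ (.of_forall fun u k => ?_)
  · have hcont : Continuous fun u : A => C * ∑ i ∈ range (m + 1), R * ‖w ^ i - u ^ i‖ := by
      fun_prop
    simpa using hcont.tendsto w
  have haeval : aeval w (P k) - aeval u (P k) =
      ∑ i ∈ range (m + 1), (P k).coeff i • (w ^ i - u ^ i) := by
    simp only [aeval_eq_sum_range' (Nat.lt_succ_of_le (hdeg k)), smul_sub, sum_sub_distrib]
  calc dist (L k (aeval w (P k))) (L k (aeval u (P k)))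
      = ‖L k (∑ i ∈ range (m + 1), (P k).coeff i • (w ^ i - u ^ i))‖ := by
        rw [dist_eq_norm, ← map_sub, haeval]
    _ ≤ C * ∑ i ∈ range (m + 1), R * ‖w ^ i - u ^ i‖ :=
        (L k).le_of_opNorm_le_of_le (hL k) <| norm_sum_le_of_le _ fun i _ => by
          rw [norm_smul]
          gcongr
          exact hcoeff k i

theorem denseRange_clm_aeval_of_monic {𝕜 A E κ : Type*} [Field 𝕜] [CommRing A]
    [Algebra 𝕜 A] [TopologicalSpace A] [AddCommGroup E] [Module 𝕜 E] [TopologicalSpace E]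
    [ContinuousConstSMul 𝕜 E] (L : κ → A →L[𝕜] E) (u : A) {m : ℕ}
    (hL : ∀ Q : 𝕜[X], Q.Monic → Q.natDegree = m → DenseRange fun N => L N (aeval u Q))
    {P : 𝕜[X]} (hP : P ≠ 0) (hm : P.natDegree = m) : DenseRange fun N => L N (aeval u P) := by
  have hb : P.leadingCoeff ≠ 0 := leadingCoeff_ne_zero.2 hP
  have hQ := hL (P * C P.leadingCoeff⁻¹) (monic_mul_leadingCoeff_inv hP)
    ((natDegree_mul_leadingCoeff_inv P hP).trans hm)
  convert (Homeomorph.smulOfNeZero P.leadingCoeff hb).surjective.denseRange.comp hQ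
    (Homeomorph.smulOfNeZero P.leadingCoeff hb).continuous using 2 with N
  simp [mul_comm P, ← Algebra.smul_def, smul_smul, hb]

theorem exists_forall_denseRange_pow_aeval {𝕜 A Λ ι : Type*} [NontriviallyNormedField 𝕜]
    [NormedCommRing A] [NormedAlgebra 𝕜 A] [CompleteSpace A] [TopologicalSpace.SeparableSpace A]
    [Countable ι] (T : Λ → A →L[𝕜] A) (K : ι → Set Λ) (hT : ∀ i, ∃ C, ∀ l ∈ K i, ‖T l‖ ≤ C)
    (hdense : ∀ i m v, ∀ δ > 0, Dense {u | ∃ F : Finset ℕ, ∀ l ∈ K i, ∀ P : 𝕜[X], P.Monic →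
      P.natDegree = m + 1 → ∃ N ∈ F, dist ((T l ^ (N + 1)) (aeval u P)) v < δ}) :
    ∃ u : A, ∀ i, ∀ l ∈ K i, ∀ P : 𝕜[X], 0 < P.natDegree →
      DenseRange fun N : ℕ => (T l ^ (N + 1)) (aeval u P) := by
  let S : ι × ℕ × ℕ → Set (Λ × 𝕜[X]) := fun z => {γ | γ.1 ∈ K z.1 ∧ γ.2.Monic ∧
    γ.2.natDegree = z.2.1 + 1 ∧ ∀ k, ‖γ.2.coeff k‖ ≤ z.2.2}
  have hequi (z N) : Equicontinuous fun (γ : S z) u => (T γ.1.1 ^ (N + 1)) (aeval u γ.1.2) := by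
    obtain ⟨C, hC⟩ := hT z.1
    exact equicontinuous_clm_aeval (C := C ^ (N + 1))
      (fun γ => (norm_pow_le' _ N.succ_pos).trans
        (pow_le_pow_left₀ (norm_nonneg _) (hC _ γ.2.1) _))
      (fun γ => γ.2.2.2.1.le) (fun γ => γ.2.2.2.2)
  have hgood (z v) (δ : ℝ) (hδ : δ > 0) : Dense {u | ∃ F : Finset ℕ, ∀ γ ∈ S z, ∃ N ∈ F,
      dist ((T γ.1 ^ (N + 1)) (aeval u γ.2)) v < δ} := by
    refine (hdense z.1 z.2.1 v δ hδ).mono ?_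
    rintro u ⟨F, hF⟩
    exact ⟨F, fun γ hγ => hF γ.1 hγ.1 γ.2 hγ.2.1 hγ.2.2.1⟩
  have hgeneric : ∀ᶠ u in residual A, ∀ z, ∀ γ ∈ S z,
      DenseRange fun N => (T γ.1 ^ (N + 1)) (aeval u γ.2) :=
    eventually_residual_forall_denseRange _ S hequi hgood
  obtain ⟨u, hu⟩ := (dense_of_mem_residual hgeneric).nonempty
  refine ⟨u, fun i l hl P hP => denseRange_clm_aeval_of_monic _ u (fun Q hQ hdeg => ?_)
    (ne_zero_of_natDegree_gt hP) rfl⟩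
  obtain ⟨R, hR⟩ := exists_nat_ge (∑ k ∈ Q.support, ‖Q.coeff k‖)
  have hcoeff (k : ℕ) : ‖Q.coeff k‖ ≤ R := by
    by_cases hk : k ∈ Q.support
    · exact (single_le_sum (fun j _ => norm_nonneg (Q.coeff j)) hk).trans hR
    · simp [notMem_support_iff.1 hk]
  have hmem : (l, Q) ∈ S (i, P.natDegree - 1, R) :=
    ⟨hl, hQ, hdeg.trans (Nat.sub_add_cancel hP).symm, hcoeff⟩
  exact hu (i, P.natDegree - 1, R) (l, Q) hmem

end PolynomialCalculus

section NormedAlgebra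

theorem norm_pow_sub_pow_le {A : Type*} [SeminormedCommRing A] [NormOneClass A] {x y : A}
    (hx : ‖x‖ ≤ 1) (hy : ‖y‖ ≤ 1) (m : ℕ) : ‖x ^ m - y ^ m‖ ≤ m * ‖x - y‖ := by
  have hterm (i : ℕ) : ‖x ^ i * y ^ (m - 1 - i)‖ ≤ 1 :=
    (norm_mul_le _ _).trans <| mul_le_one₀
      ((norm_pow_le _ _).trans (pow_le_one₀ (norm_nonneg _) hx)) (norm_nonneg _)
      ((norm_pow_le _ _).trans (pow_le_one₀ (norm_nonneg _) hy))
  rw [← geom_sum₂_mul x y m]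
  refine (norm_mul_le _ _).trans (mul_le_mul_of_nonneg_right ?_ (norm_nonneg _))
  simpa using norm_sum_le_of_le (range m) fun i _ => hterm i

theorem natCast_succ_mul_algebraMap_pow_mul_smul {𝕜 A : Type*} [Field 𝕜] [CharZero 𝕜] [CommRing A]
    [Algebra 𝕜 A] {e : 𝕜} (he : e ≠ 0) (m : ℕ) (Y : A) :
    (↑(m + 1) : A) * algebraMap 𝕜 A e ^ m * (((m + 1) * e ^ m)⁻¹ • Y) = Y := by
  have hm : (m + 1 : 𝕜) * e ^ m ≠ 0 := mul_ne_zero m.cast_add_one_ne_zero (pow_ne_zero m he)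
  rw [Algebra.smul_def, ← mul_assoc, ← map_natCast (algebraMap 𝕜 A), ← map_pow, ← map_mul,
    ← map_mul, Nat.cast_succ, mul_inv_cancel₀ hm, map_one, one_mul]

/-- The scalar `c` is chosen so that the term of `(ε + c Y) ^ (m + 1)` linear in `Y` is `Y`. -/
theorem exists_add_smul_pow_succ_eq {𝕜 A : Type*} [RCLike 𝕜] [SeminormedCommRing A]
    [NormedAlgebra 𝕜 A] [NormOneClass A] {ε : ℝ} (hε : 0 < ε) (hε' : ε ≤ 1 / 2) {m : ℕ} {Y : A}
    (hY : ‖Y‖ ≤ ε ^ (m + 1)) :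
    ∃ (c : 𝕜) (K : A), ‖c • Y‖ ≤ ε ∧ ‖K * Y ^ 2‖ ≤ 2 * (‖Y‖ / ε ^ m) ∧
      (algebraMap 𝕜 A ε + c • Y) ^ (m + 1) = algebraMap 𝕜 A ε ^ (m + 1) + Y + K * Y ^ 2 := by
  set c : 𝕜 := ((m + 1) * ε ^ m)⁻¹
  set E : A := algebraMap 𝕜 A ε
  have hnormE : ‖E‖ = ε := by simp [E, norm_algebraMap', abs_of_pos hε]
  have hnormc : (m + 1) * ‖c • Y‖ = ‖Y‖ / ε ^ m := by
    have hm : ‖(m + 1 : 𝕜)‖ = m + 1 := mod_cast RCLike.norm_natCast (K := 𝕜) (m + 1)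
    rw [norm_smul, norm_inv, norm_mul, norm_pow, RCLike.norm_ofReal, abs_of_pos hε, hm]
    field_simp
  have hcY : ‖c • Y‖ ≤ ε := by
    have hle : ‖Y‖ / ε ^ m ≤ ε := by rwa [div_le_iff₀ (by positivity), ← pow_succ']
    nlinarith [mul_nonneg m.cast_nonneg (norm_nonneg (c • Y))]
  have hlinear : (↑(m + 1) : A) * E ^ m * (c • Y) = Y :=
    natCast_succ_mul_algebraMap_pow_mul_smul (mod_cast hε.ne') m Y
  obtain ⟨K, hK⟩ := Polynomial.powAddExpansion E (c • Y) (m + 1)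
  rw [Nat.add_sub_cancel, hlinear, smul_pow, mul_smul_comm, ← smul_mul_assoc] at hK
  refine ⟨c, c ^ 2 • K, hcY, ?_, hK⟩
  have hpow : ‖(E + c • Y) ^ (m + 1) - E ^ (m + 1)‖ ≤ ‖Y‖ / ε ^ m := by
    have := norm_pow_sub_pow_le ((norm_add_le E (c • Y)).trans (by linarith))
      (hnormE.trans_le (by linarith)) (m + 1)
    rwa [add_sub_cancel_left, Nat.cast_succ, hnormc] at this
  have hquad : c ^ 2 • K * Y ^ 2 = (E + c • Y) ^ (m + 1) - E ^ (m + 1) - Y := by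
    rw [hK]
    ring
  have hεm : ‖Y‖ ≤ ‖Y‖ / ε ^ m :=
    le_div_self (norm_nonneg _) (by positivity) (pow_le_one₀ hε.le (by linarith))
  rw [hquad]
  linarith [norm_sub_le ((E + c • Y) ^ (m + 1) - E ^ (m + 1)) Y]

end NormedAlgebra

namespace lpC

section Norm

theorem summable_norm (x : lpC 1) : Summable fun n => ‖x n‖ :=
  (lp.memℓp x).summable_of_one.norm

theorem norm_eq_tsum (x : lpC 1) : ‖x‖ = ∑' n, ‖x n‖ := by
  simpa using lp.norm_eq_tsum_rpow (by simp) x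

theorem norm_le_of_summable {φ : ℕ → ℝ} (hφ : Summable φ) {x : lpC 1} (h : ∀ n, ‖x n‖ ≤ φ n) :
    ‖x‖ ≤ ∑' n, φ n :=
  (norm_eq_tsum x).trans_le ((summable_norm x).tsum_le_tsum h hφ)

theorem memℓp_of_norm_apply_le {φ : ℕ → ℂ} {x : lpC 1} {C : ℝ} {N : ℕ}
    (h : ∀ k, ‖φ k‖ ≤ C * ‖x (k + N)‖) : Memℓp φ 1 := by
  refine memℓp_gen ?_
  simpa using Summable.of_nonneg_of_le (fun k => norm_nonneg _) h
    (((summable_nat_add_iff N).2 (summable_norm x)).mul_left C)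

theorem norm_le_of_norm_apply_le {x y : lpC 1} {C : ℝ} {N : ℕ} (hC : 0 ≤ C)
    (h : ∀ k, ‖y k‖ ≤ C * ‖x (k + N)‖) : ‖y‖ ≤ C * ‖x‖ := by
  have hsum : Summable fun k => ‖x (k + N)‖ := (summable_nat_add_iff N).2 (summable_norm x)
  refine (norm_le_of_summable (hsum.mul_left C) h).trans ?_
  rw [tsum_mul_left, norm_eq_tsum]
  exact mul_le_mul_of_nonneg_left (tsum_comp_le_tsum_of_inj (summable_norm x)
    (fun _ => norm_nonneg _) (add_left_injective N)) hC

end Norm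

section Ring

open PowerSeries

/-- The convolution product of `ℓ¹(ℕ)`. -/
scoped instance : Mul (lpC 1) where
  mul x y := ⟨fun n => ∑ kl ∈ antidiagonal n, x kl.1 * y kl.2, memℓp_gen <| by
    simpa using summable_norm_sum_mul_antidiagonal_of_summable_norm
      (summable_norm x) (summable_norm y)⟩

theorem mul_apply (x y : lpC 1) (n : ℕ) :
    (x * y) n = ∑ kl ∈ antidiagonal n, x kl.1 * y kl.2 := rfl

scoped instance : One (lpC 1) := ⟨lp.single 1 0 1⟩

/-- The generating power series of a sequence; it identifies convolution with the product of
power series, from which `ℓ¹(ℕ)` inherits its ring axioms. -/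
def toPowerSeries : lpC 1 →ₗ[ℂ] ℂ⟦X⟧ where
  toFun x := PowerSeries.mk fun n => x n
  map_add' x y := by ext; simp
  map_smul' c x := by ext; simp

@[simp]
theorem coeff_toPowerSeries (n : ℕ) (x : lpC 1) : coeff n (toPowerSeries x) = x n :=
  coeff_mk n _

theorem toPowerSeries_injective : Function.Injective toPowerSeries := fun x y h => by
  ext n
  simp only [← coeff_toPowerSeries, h]

theorem toPowerSeries_mul (x y : lpC 1) :
    toPowerSeries (x * y) = toPowerSeries x * toPowerSeries y := by
  ext n
  simp [coeff_mul, mul_apply]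

theorem toPowerSeries_single (k : ℕ) (c : ℂ) :
    toPowerSeries (lp.single 1 k c) = monomial k c := by
  ext n
  simp [coeff_monomial, Pi.single_apply]

theorem toPowerSeries_one : toPowerSeries 1 = 1 :=
  (toPowerSeries_single 0 1).trans (monomial_zero_eq_C_apply 1)

theorem norm_mul_le' (x y : lpC 1) : ‖x * y‖ ≤ ‖x‖ * ‖y‖ := by
  rw [norm_eq_tsum x, norm_eq_tsum y, tsum_mul_tsum_eq_tsum_sum_antidiagonal_of_summable_norm
    (summable_norm x).norm (summable_norm y).norm]
  refine norm_le_of_summable ?_ fun n => ?_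
  · exact (summable_norm_sum_mul_antidiagonal_of_summable_norm
      (summable_norm x).norm (summable_norm y).norm).of_norm
  · simpa only [mul_apply, norm_mul] using
      norm_sum_le (antidiagonal n) fun kl => x kl.1 * y kl.2

scoped instance : NormedCommRing (lpC 1) where
  mul_assoc x y z := toPowerSeries_injective <| by simp only [toPowerSeries_mul, mul_assoc]
  mul_comm x y := toPowerSeries_injective <| by simp only [toPowerSeries_mul, mul_comm]
  one_mul x := toPowerSeries_injective <| by
    rw [toPowerSeries_mul, toPowerSeries_one, one_mul]
  mul_one x := toPowerSeries_injective <| by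
    rw [toPowerSeries_mul, toPowerSeries_one, mul_one]
  zero_mul x := toPowerSeries_injective <| by rw [toPowerSeries_mul, map_zero, zero_mul]
  mul_zero x := toPowerSeries_injective <| by rw [toPowerSeries_mul, map_zero, mul_zero]
  left_distrib x y z := toPowerSeries_injective <| by
    simp only [map_add, toPowerSeries_mul, mul_add]
  right_distrib x y z := toPowerSeries_injective <| by
    simp only [map_add, toPowerSeries_mul, add_mul]
  norm_mul_le := norm_mul_le'
  dist_eq x y := by rw [dist_eq_norm, neg_add_eq_sub, norm_sub_rev]

scoped instance : NormOneClass (lpC 1) where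
  norm_one := (lp.norm_single (by simp) 0 1).trans norm_one

scoped instance : NormedAlgebra ℂ (lpC 1) where
  __ := Algebra.ofModule
    (fun c x y => toPowerSeries_injective <| by
      simp only [map_smul, toPowerSeries_mul, smul_mul_assoc])
    (fun c x y => toPowerSeries_injective <| by
      simp only [map_smul, toPowerSeries_mul, mul_smul_comm])
  norm_smul_le := norm_smul_le

/-- The polynomial variable, i.e. the second basis vector of `ℓ¹(ℕ)`: multiplication by `X ^ N`
is the `N`-th power of the forward shift. -/
protected def X : lpC 1 := lp.single 1 1 1

theorem toPowerSeries_X_pow_mul (N : ℕ) (x : lpC 1) :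
    toPowerSeries (lpC.X ^ N * x) = PowerSeries.X ^ N * toPowerSeries x := by
  induction N with
  | zero => simp
  | succ N ih =>
    rw [pow_succ', mul_assoc, toPowerSeries_mul, ih, lpC.X, toPowerSeries_single, pow_succ',
      mul_assoc]
    rfl

theorem X_pow_mul_apply_add (N k : ℕ) (x : lpC 1) : (lpC.X ^ N * x) (k + N) = x k := by
  rw [← coeff_toPowerSeries, toPowerSeries_X_pow_mul, coeff_X_pow_mul, coeff_toPowerSeries]

theorem X_pow_eq_single (N : ℕ) : lpC.X ^ N = lp.single 1 N 1 :=
  toPowerSeries_injective <| by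
    rw [← mul_one (lpC.X ^ N), toPowerSeries_X_pow_mul, toPowerSeries_one, mul_one,
      toPowerSeries_single, X_pow_eq]

theorem norm_X_pow_mul_le (N : ℕ) (x : lpC 1) : ‖lpC.X ^ N * x‖ ≤ ‖x‖ := by
  refine (norm_mul_le _ _).trans_eq ?_
  rw [X_pow_eq_single, lp.norm_single (by simp), norm_one, one_mul]

end Ring

section Support

open Filter Topology
open scoped Pointwise

/-- The sequences of `ℓ¹(ℕ)` vanishing off `s`. -/
def supportedOn (s : Set ℕ) : Submodule ℂ (lpC 1) where
  carrier := {x | ∀ n ∉ s, x n = 0}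
  add_mem' hx hy n hn := by simp [hx n hn, hy n hn]
  zero_mem' n _ := rfl
  smul_mem' c x hx n hn := by simp [hx n hn]

variable {s t : Set ℕ} {x y : lpC 1}

theorem supportedOn_mono (h : s ⊆ t) : supportedOn s ≤ supportedOn t :=
  fun _ hx n hn => hx n fun hs => hn (h hs)

theorem mem_supportedOn_Ici_zero (x : lpC 1) : x ∈ supportedOn (Set.Ici 0) :=
  fun n hn => (hn n.zero_le).elim

theorem single_mem_supportedOn (k : ℕ) (c : ℂ) : lp.single 1 k c ∈ supportedOn {k} :=
  fun _ hn => Pi.single_eq_of_ne hn _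

theorem one_mem_supportedOn : (1 : lpC 1) ∈ supportedOn {0} :=
  single_mem_supportedOn 0 1

theorem X_pow_mem_supportedOn (N : ℕ) : lpC.X ^ N ∈ supportedOn {N} := by
  rw [X_pow_eq_single]
  exact single_mem_supportedOn N 1

theorem mul_mem_supportedOn (hx : x ∈ supportedOn s) (hy : y ∈ supportedOn t) :
    x * y ∈ supportedOn (s + t) := by
  intro n hn
  rw [mul_apply]
  refine sum_eq_zero fun kl hkl => ?_
  by_cases hk : kl.1 ∈ s
  · have hl : kl.2 ∉ t := fun hl => hn ⟨_, hk, _, hl, mem_antidiagonal.1 hkl⟩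
    rw [hy _ hl, mul_zero]
  · rw [hx _ hk, zero_mul]

theorem mul_mem_supportedOn_Iic {a b : ℕ} (hx : x ∈ supportedOn (Set.Iic a))
    (hy : y ∈ supportedOn (Set.Iic b)) : x * y ∈ supportedOn (Set.Iic (a + b)) :=
  supportedOn_mono (Set.Iic_add_Iic_subset a b) (mul_mem_supportedOn hx hy)

theorem mul_mem_supportedOn_Ici {a b : ℕ} (hx : x ∈ supportedOn (Set.Ici a))
    (hy : y ∈ supportedOn (Set.Ici b)) : x * y ∈ supportedOn (Set.Ici (a + b)) :=
  supportedOn_mono (Set.Ici_add_Ici_subset a b) (mul_mem_supportedOn hx hy)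

theorem pow_mem_supportedOn_Iic {a : ℕ} (hx : x ∈ supportedOn (Set.Iic a)) (m : ℕ) :
    x ^ m ∈ supportedOn (Set.Iic (m * a)) := by
  induction m with
  | zero => simpa using supportedOn_mono (by simp) one_mem_supportedOn
  | succ m ih =>
    rw [pow_succ, add_mul, one_mul]
    exact mul_mem_supportedOn_Iic ih hx

/-- The sequence obtained from `x` by replacing the terms of index `≥ p` by `0`. -/
def truncate (p : ℕ) (x : lpC 1) : lpC 1 := ∑ k ∈ range p, lp.single 1 k (x k)

theorem tendsto_truncate (x : lpC 1) : Tendsto (fun p => truncate p x) atTop (𝓝 x) :=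
  (lp.hasSum_single (by simp) x).tendsto_sum_nat

theorem truncate_mem_supportedOn (p : ℕ) (x : lpC 1) : truncate p x ∈ supportedOn (Set.Iic p) :=
  Submodule.sum_mem _ fun k hk => supportedOn_mono
    (Set.singleton_subset_iff.2 (Set.mem_Iic.2 (mem_range.1 hk).le)) (single_mem_supportedOn k _)

scoped instance : TopologicalSpace.SeparableSpace (lpC 1) := by
  have hspan : TopologicalSpace.IsSeparable
      (closure (Submodule.span ℂ (Set.range fun N => lpC.X ^ N) : Set (lpC 1))) :=
    ((Set.countable_range _).isSeparable.span (R := ℂ)).closure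
  refine TopologicalSpace.isSeparable_univ_iff.1 (hspan.mono fun x _ => ?_)
  refine mem_closure_of_tendsto (tendsto_truncate x) (.of_forall fun p => ?_)
  refine Submodule.sum_mem _ fun k _ => ?_
  have hsingle : (lp.single 1 k (x k) : lpC 1) = x k • lpC.X ^ k := by
    rw [X_pow_eq_single, ← lp.single_smul, smul_eq_mul, mul_one]
  rw [hsingle]
  exact Submodule.smul_mem _ _ (Submodule.subset_span (Set.mem_range_self k))

theorem exists_pi_mem_supportedOn_dist_lt {ι : Type*} [Fintype ι] (x y : ι → lpC 1) {ε : ℝ}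
    (hε : 0 < ε) : ∃ (p : ℕ) (x' y' : ι → lpC 1), (∀ i, x' i ∈ supportedOn (Set.Iic p)) ∧
      (∀ i, y' i ∈ supportedOn (Set.Iic p)) ∧ dist x' x < ε ∧ dist y' y < ε := by
  have htendsto (z : ι → lpC 1) : Tendsto (fun p i => truncate p (z i)) atTop (𝓝 z) :=
    tendsto_pi_nhds.2 fun i => tendsto_truncate (z i)
  obtain ⟨p, hx, hy⟩ := ((Metric.tendsto_nhds.1 (htendsto x) ε hε).and
    (Metric.tendsto_nhds.1 (htendsto y) ε hε)).exists
  exact ⟨p, _, _, fun i => truncate_mem_supportedOn p (x i),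
    fun i => truncate_mem_supportedOn p (y i), hx, hy⟩

end Support

section Shift

/-- The weighted backward shift `B_w` on `ℓ¹(ℕ)`; only the values of `w` at positive integers
matter. -/
def weightedBackwardShift (w : ℕ → ℝ) {C : ℝ} (hw : ∀ n, |w n| ≤ C) : lpC 1 →L[ℂ] lpC 1 :=
  have hle (x : lpC 1) (k : ℕ) : ‖(w (k + 1) : ℂ) * x (k + 1)‖ ≤ C * ‖x (k + 1)‖ := by
    rw [norm_mul, Complex.norm_real]
    exact mul_le_mul_of_nonneg_right (hw _) (norm_nonneg _)
  LinearMap.mkContinuous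
    { toFun x := ⟨fun k => w (k + 1) * x (k + 1), memℓp_of_norm_apply_le (hle x)⟩
      map_add' x y := by ext k; exact mul_add _ _ _
      map_smul' c x := by ext k; exact mul_left_comm _ _ _ }
    C fun x => norm_le_of_norm_apply_le ((abs_nonneg _).trans (hw 0)) (hle x)

theorem weightedBackwardShift_apply {w : ℕ → ℝ} {C : ℝ} (hw : ∀ n, |w n| ≤ C) (x : lpC 1) (k : ℕ) :
    weightedBackwardShift w hw x k = w (k + 1) * x (k + 1) := rfl

theorem norm_weightedBackwardShift_le {w : ℕ → ℝ} {C : ℝ} (hw : ∀ n, |w n| ≤ C) :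
    ‖weightedBackwardShift w hw‖ ≤ C := by
  rw [weightedBackwardShift]
  exact LinearMap.mkContinuous_norm_le _ ((abs_nonneg _).trans (hw 0)) _

theorem weightedBackwardShift_pow_apply {w : ℕ → ℝ} {C : ℝ} (hw : ∀ n, |w n| ≤ C) (N : ℕ)
    (x : lpC 1) (k : ℕ) : (weightedBackwardShift w hw ^ N) x k =
      ((∏ l ∈ range N, w (k + l + 1) : ℝ) : ℂ) * x (k + N) := by
  induction N generalizing x with
  | zero => simp
  | succ N ih =>
    rw [pow_succ, mul_apply_eq_comp, ih, weightedBackwardShift_apply, prod_range_succ,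
      Complex.ofReal_mul, mul_assoc, add_assoc k N 1]

end Shift

section HarmonicWeight

/-- The weight sequence `w_n(a) = 1 + a / n`, `n ≥ 1`. -/
def harmonicWeight (a : ℝ) (n : ℕ) : ℝ := 1 + a / n

theorem abs_harmonicWeight_le (a : ℝ) (n : ℕ) : |harmonicWeight a n| ≤ 1 + |a| := by
  refine (abs_add_le _ _).trans ?_
  rw [abs_one, abs_div, Nat.abs_cast]
  gcongr
  exact div_nat_le_self_of_nonnneg (abs_nonneg a) n

/-- The product `w_{k+1}(a) ⋯ w_{k+N}(a)`, by which the `N`-th power of the weighted shift scales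
the entry of index `k + N` as it moves to position `k`. -/
def harmonicWeightProd (a : ℝ) (k N : ℕ) : ℝ := ∏ l ∈ range N, harmonicWeight a (k + l + 1)

variable {a b : ℝ}

theorem harmonicWeight_pos (ha : 0 ≤ a) (n : ℕ) : 0 < harmonicWeight a n := by
  rw [harmonicWeight]
  positivity

theorem harmonicWeightProd_pos (ha : 0 ≤ a) (k N : ℕ) : 0 < harmonicWeightProd a k N :=
  prod_pos fun _ _ => harmonicWeight_pos ha _

theorem harmonicWeightProd_one (k N : ℕ) : harmonicWeightProd 1 k N = (k + N + 1) / (k + 1) := by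
  induction N with
  | zero => simp [harmonicWeightProd, div_self (k.cast_add_one_ne_zero (R := ℝ))]
  | succ N ih =>
    rw [harmonicWeightProd, prod_range_succ, ← harmonicWeightProd, ih, harmonicWeight]
    push_cast
    field_simp
    ring

theorem harmonicWeight_le_pow (n m : ℕ) (han : a ≤ n) :
    harmonicWeight a m ≤ harmonicWeight 1 m ^ n := by
  have hm : (0 : ℝ) ≤ 1 / m := by positivity
  refine le_trans ?_ (one_add_mul_le_pow (by linarith) n)
  rw [harmonicWeight, mul_one_div]
  gcongr

theorem harmonicWeight_one_le_pow {n : ℕ} (ha : 0 ≤ a) (han : 1 ≤ n * a) (m : ℕ) :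
    harmonicWeight 1 m ≤ harmonicWeight a m ^ n := by
  have hm : 0 ≤ a / m := by positivity
  refine le_trans ?_ (one_add_mul_le_pow (by linarith) n)
  rw [harmonicWeight, ← mul_div_assoc]
  gcongr

theorem harmonicWeightProd_le (ha : 0 ≤ a) {n : ℕ} (han : a ≤ n) (k N : ℕ) :
    harmonicWeightProd a k N ≤ ((k + N + 1) / (k + 1) : ℝ) ^ n := by
  rw [← harmonicWeightProd_one, harmonicWeightProd, harmonicWeightProd, ← prod_pow]
  exact prod_le_prod (fun _ _ => (harmonicWeight_pos ha _).le)
    fun _ _ => harmonicWeight_le_pow n _ han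

theorem le_harmonicWeightProd_pow (ha : 0 ≤ a) {n : ℕ} (han : 1 ≤ n * a) (k N : ℕ) :
    (k + N + 1) / (k + 1) ≤ harmonicWeightProd a k N ^ n := by
  rw [← harmonicWeightProd_one, harmonicWeightProd, harmonicWeightProd, ← prod_pow]
  exact prod_le_prod (fun _ _ => (harmonicWeight_pos zero_le_one _).le)
    fun _ _ => harmonicWeight_one_le_pow ha han _

theorem harmonicWeight_div (hb : 0 ≤ b) {m : ℕ} (hm : 0 < m) :
    harmonicWeight a m / harmonicWeight b m = 1 + (a - b) / (m + b) := by
  rw [harmonicWeight, harmonicWeight]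
  field_simp
  ring

theorem abs_harmonicWeightProd_div_sub_one_le (hb : 0 ≤ b) (k N : ℕ) :
    |harmonicWeightProd a k N / harmonicWeightProd b k N - 1| ≤
      Real.exp (|a - b| * (1 + Real.log N)) - 1 := by
  have hratio : harmonicWeightProd a k N / harmonicWeightProd b k N =
      ∏ l ∈ range N, (1 + (a - b) / ((k + l + 1 : ℕ) + b)) := by
    simp only [harmonicWeightProd, ← prod_div_distrib, harmonicWeight_div hb (Nat.succ_pos _)]
  have hsum : ∑ l ∈ range N, ‖(a - b) / ((k + l + 1 : ℕ) + b)‖ ≤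
      |a - b| * (1 + Real.log N) := by
    refine le_trans ?_ (mul_le_mul_of_nonneg_left (harmonic_le_one_add_log N) (abs_nonneg _))
    rw [harmonic]
    push_cast
    rw [mul_sum]
    refine sum_le_sum fun l _ => ?_
    have hden : 0 ≤ (k + l + 1 : ℝ) + b := by positivity
    rw [Real.norm_eq_abs, abs_div, div_eq_mul_inv, abs_of_nonneg hden]
    refine mul_le_mul_of_nonneg_left (inv_anti₀ (by positivity) ?_) (abs_nonneg _)
    linarith [k.cast_nonneg (α := ℝ)]
  rw [hratio, ← Real.norm_eq_abs]
  refine (norm_prod_one_add_sub_one_le _ _).trans ?_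
  gcongr

end HarmonicWeight

section HarmonicShift

/-- The weighted backward shift with weights `w_n(a) = 1 + a / n`. -/
def harmonicShift (a : ℝ) : lpC 1 →L[ℂ] lpC 1 :=
  weightedBackwardShift (harmonicWeight a) (abs_harmonicWeight_le a)

theorem norm_harmonicShift_le (a : ℝ) : ‖harmonicShift a‖ ≤ 1 + |a| :=
  norm_weightedBackwardShift_le _

theorem harmonicShift_pow_apply (a : ℝ) (N : ℕ) (x : lpC 1) (k : ℕ) :
    (harmonicShift a ^ N) x k = harmonicWeightProd a k N * x (k + N) :=
  weightedBackwardShift_pow_apply _ N x k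

theorem harmonicShift_pow_eq_zero (a : ℝ) {N : ℕ} {x : lpC 1} (hx : x ∈ supportedOn (Set.Iio N)) :
    (harmonicShift a ^ N) x = 0 := by
  ext k
  rw [harmonicShift_pow_apply, hx _ (by simp), mul_zero]
  rfl

variable {a b : ℝ}

theorem norm_harmonicShift_pow_apply_le (ha : 0 ≤ a) {n : ℕ} (han : a ≤ n) {N g : ℕ} (hg : 0 < g)
    {x : lpC 1} (hx : x ∈ supportedOn (Set.Ici (N + g))) :
    ‖(harmonicShift a ^ N) x‖ ≤ (1 + N / g : ℝ) ^ n * ‖x‖ := by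
  refine norm_le_of_norm_apply_le (N := N) (by positivity) fun k => ?_
  rw [harmonicShift_pow_apply]
  rcases lt_or_ge k g with hk | hk
  · rw [hx _ (by simpa [add_comm k N] using hk), mul_zero, norm_zero, mul_zero]
  · rw [norm_mul, Complex.norm_real, Real.norm_eq_abs,
      abs_of_pos (harmonicWeightProd_pos ha k N)]
    gcongr
    calc harmonicWeightProd a k N ≤ ((k + N + 1) / (k + 1)) ^ n := harmonicWeightProd_le ha han k N
      _ = (1 + N / (k + 1)) ^ n := by
        congr 1
        field_simp
        ring
      _ ≤ (1 + N / g) ^ n := by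
        gcongr
        exact_mod_cast hk.trans k.le_succ

theorem le_harmonicWeightProd (hb : 0 ≤ b) {n : ℕ} (hbn : 1 ≤ n * b) {p k N : ℕ} (hk : k ≤ p)
    {Q : ℝ} (hN : (p + 1) * Q ^ n ≤ N) : Q ≤ harmonicWeightProd b k N := by
  have hn : n ≠ 0 := by
    rintro rfl
    norm_num at hbn
  refine le_of_pow_le_pow_left₀ hn (harmonicWeightProd_pos hb k N).le ?_
  refine le_trans ?_ (le_harmonicWeightProd_pow hb hbn k N)
  have hkp : (k : ℝ) ≤ p := mod_cast hk
  calc Q ^ n ≤ N / (p + 1) := by rwa [le_div_iff₀' (by positivity)]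
    _ ≤ N / (k + 1) := by gcongr
    _ ≤ (k + N + 1) / (k + 1) := by gcongr; linarith [k.cast_nonneg (α := ℝ)]

/-- `V` is `v` divided termwise by `w_{k+1}(b) ⋯ w_{k+N}(b)`, a product which is at least `Q`. -/
theorem exists_norm_harmonicShift_pow_X_pow_mul_sub_le (hb : 0 ≤ b) {n : ℕ} (hbn : 1 ≤ n * b)
    {p N : ℕ} {Q : ℝ} (hQ : 0 < Q) (hN : (p + 1) * Q ^ n ≤ N) {v : lpC 1}
    (hv : v ∈ supportedOn (Set.Iic p)) :
    ∃ V ∈ supportedOn (Set.Iic p), ‖V‖ ≤ ‖v‖ / Q ∧ ∀ a, ‖(harmonicShift a ^ N) (lpC.X ^ N * V) - v‖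
      ≤ (Real.exp (|a - b| * (1 + Real.log N)) - 1) * ‖v‖ := by
  have hle (k : ℕ) : ‖v k / harmonicWeightProd b k N‖ ≤ Q⁻¹ * ‖v k‖ := by
    by_cases hk : k ≤ p
    · rw [norm_div, Complex.norm_real, Real.norm_eq_abs,
        abs_of_pos (harmonicWeightProd_pos hb k N), div_eq_inv_mul]
      gcongr
      exact le_harmonicWeightProd hb hbn hk hN
    · simp [hv k hk]
  let V : lpC 1 := ⟨fun k => v k / harmonicWeightProd b k N, memℓp_of_norm_apply_le (N := 0) hle⟩
  refine ⟨V, fun k hk => ?_, ?_, fun a => ?_⟩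
  · simp [V, hv k hk]
  · rw [div_eq_inv_mul]
    exact norm_le_of_norm_apply_le (N := 0) (by positivity) hle
  · have hexp : 0 ≤ Real.exp (|a - b| * (1 + Real.log N)) - 1 :=
      (abs_nonneg _).trans (abs_harmonicWeightProd_div_sub_one_le hb 0 N)
    refine norm_le_of_norm_apply_le (N := 0) hexp fun k => ?_
    have hcoord : ((harmonicShift a ^ N) (lpC.X ^ N * V) - v) k =
        ((harmonicWeightProd a k N / harmonicWeightProd b k N - 1 : ℝ) : ℂ) * v k := by
      rw [lp.coeFn_sub, Pi.sub_apply, harmonicShift_pow_apply, X_pow_mul_apply_add]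
      push_cast
      ring
    rw [hcoord, norm_mul, Complex.norm_real]
    exact mul_le_mul_of_nonneg_right (abs_harmonicWeightProd_div_sub_one_le hb k N) (norm_nonneg _)

end HarmonicShift

section ApproximateRoot

open Polynomial

variable {x y : lpC 1}

theorem pow_succ_sub_pow_succ_mem_supportedOn_Iic {D p : ℕ} (hx : x ∈ supportedOn (Set.Iic D))
    (hy : y ∈ supportedOn (Set.Iic D)) (hxy : x - y ∈ supportedOn (Set.Iic p)) (m : ℕ) :
    x ^ (m + 1) - y ^ (m + 1) ∈ supportedOn (Set.Iic (m * D + p)) := by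
  rw [← geom_sum₂_mul x y (m + 1)]
  refine mul_mem_supportedOn_Iic (Submodule.sum_mem _ fun i hi => ?_) hxy
  have hD : m * D = i * D + (m + 1 - 1 - i) * D := by
    rw [← add_mul, Nat.add_sub_cancel, Nat.add_sub_cancel' (Nat.lt_succ_iff.1 (mem_range.1 hi))]
  rw [hD]
  exact mul_mem_supportedOn_Iic (pow_mem_supportedOn_Iic hx i) (pow_mem_supportedOn_Iic hy _)

theorem aeval_sub_pow_mem_supportedOn_Iic {D m : ℕ} (hx : x ∈ supportedOn (Set.Iic D))
    {P : ℂ[X]} (hP : P.Monic) (hm : P.natDegree = m + 1) :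
    aeval x P - x ^ (m + 1) ∈ supportedOn (Set.Iic (m * D)) := by
  have hsum : aeval x P - x ^ (m + 1) = ∑ i ∈ range (m + 1), P.coeff i • x ^ i := by
    rw [aeval_eq_sum_range, hm, sum_range_succ, ← hm, hP.coeff_natDegree, one_smul,
      add_sub_cancel_right]
  rw [hsum]
  refine Submodule.sum_mem _ fun i hi => Submodule.smul_mem _ _ ?_
  exact supportedOn_mono
    (Set.Iic_subset_Iic.2 (Nat.mul_le_mul_right D (Nat.lt_succ_iff.1 (mem_range.1 hi))))
    (pow_mem_supportedOn_Iic hx i)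

theorem aeval_add_sub_pow_mem_supportedOn_Iic {D p m : ℕ} (hpD : p ≤ D)
    (hx : x ∈ supportedOn (Set.Iic p)) (hy : y ∈ supportedOn (Set.Iic D)) {P : ℂ[X]}
    (hP : P.Monic) (hm : P.natDegree = m + 1) :
    aeval (x + y) P - y ^ (m + 1) ∈ supportedOn (Set.Iic (m * D + p)) := by
  have hxy : x + y ∈ supportedOn (Set.Iic D) :=
    add_mem (supportedOn_mono (Set.Iic_subset_Iic.2 hpD) hx) hy
  rw [← sub_add_sub_cancel _ ((x + y) ^ (m + 1))]
  exact add_mem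
    (supportedOn_mono (Set.Iic_subset_Iic.2 (Nat.le_add_right _ _))
      (aeval_sub_pow_mem_supportedOn_Iic hxy hP hm))
    (pow_succ_sub_pow_succ_mem_supportedOn_Iic hxy hy (by rwa [add_sub_cancel_right]) m)

/-- For `u = u₀ + X ^ s * (ε + c Y)`, the terms of `u ^ (m + 1)` involving `u₀`, the constant
`ε ^ (m + 1)` and the lower powers of `u` all live in low degree, so what remains is the term of
`(ε + c Y) ^ (m + 1)` linear in `Y` and those of order at least two. -/
theorem exists_aeval_sub_mem_supportedOn {m p s a b : ℕ} (ha : 0 < a) (hs : m * b + p ≤ s)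
    {ε : ℝ} (hε : 0 < ε) (hε' : ε ≤ 1 / 2) {u₀ Y : lpC 1} (hu₀ : u₀ ∈ supportedOn (Set.Iic p))
    (hY : Y ∈ supportedOn (Set.Icc a b)) (hnorm : ‖Y‖ ≤ ε ^ (m + 1)) :
    ∃ u R : lpC 1, ‖u - u₀‖ ≤ 2 * ε ∧ R ∈ supportedOn (Set.Ici ((m + 1) * s + 2 * a)) ∧
      ‖R‖ ≤ 2 * (‖Y‖ / ε ^ m) ∧ ∀ P : ℂ[X], P.Monic → P.natDegree = m + 1 →
        aeval u P - (lpC.X ^ ((m + 1) * s) * Y + R) ∈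
          supportedOn (Set.Iio ((m + 1) * s + a)) := by
  obtain ⟨c, K, hcY, hK, hpow⟩ := exists_add_smul_pow_succ_eq (𝕜 := ℂ) hε hε' hnorm
  set E : lpC 1 := algebraMap ℂ (lpC 1) (RCLike.ofReal ε) with hEdef
  have hE : E ∈ supportedOn (Set.Iic 0) := by
    rw [hEdef, Algebra.algebraMap_eq_smul_one]
    exact Submodule.smul_mem _ _ (supportedOn_mono (by simp) one_mem_supportedOn)
  have hnormE : ‖E‖ = ε := by simp [hEdef, norm_algebraMap', abs_of_pos hε]
  have hX (N : ℕ) : lpC.X ^ N ∈ supportedOn (Set.Iic N) :=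
    supportedOn_mono (by simp) (X_pow_mem_supportedOn N)
  have hw : lpC.X ^ s * (E + c • Y) ∈ supportedOn (Set.Iic (s + b)) :=
    mul_mem_supportedOn_Iic (hX s) (add_mem
      (supportedOn_mono (Set.Iic_subset_Iic.2 b.zero_le) hE)
      (Submodule.smul_mem _ _ (supportedOn_mono Set.Icc_subset_Iic_self hY)))
  have hwpow : (lpC.X ^ s * (E + c • Y)) ^ (m + 1) = lpC.X ^ ((m + 1) * s) * E ^ (m + 1) +
      (lpC.X ^ ((m + 1) * s) * Y + lpC.X ^ ((m + 1) * s) * (K * Y ^ 2)) := by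
    rw [mul_pow, hpow, ← pow_mul, mul_comm s]
    ring
  refine ⟨u₀ + lpC.X ^ s * (E + c • Y), lpC.X ^ ((m + 1) * s) * (K * Y ^ 2), ?_, ?_,
    (norm_X_pow_mul_le _ _).trans hK, fun P hP hm => ?_⟩
  · rw [add_sub_cancel_left]
    linarith [norm_X_pow_mul_le s (E + c • Y), norm_add_le E (c • Y)]
  · have hY' := supportedOn_mono Set.Icc_subset_Ici_self hY
    have hKY := mul_mem_supportedOn_Ici (mem_supportedOn_Ici_zero K)
      (mul_mem_supportedOn_Ici hY' hY')
    rw [zero_add, ← two_mul, ← pow_two] at hKY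
    exact mul_mem_supportedOn_Ici
      (supportedOn_mono (by simp) (X_pow_mem_supportedOn _)) hKY
  · have hlow := aeval_add_sub_pow_mem_supportedOn_Iic (by omega) hu₀ hw hP hm
    have hconst : lpC.X ^ ((m + 1) * s) * E ^ (m + 1) ∈ supportedOn (Set.Iic ((m + 1) * s)) := by
      simpa using mul_mem_supportedOn_Iic (hX _) (pow_mem_supportedOn_Iic hE (m + 1))
    rw [hwpow, ← sub_sub] at hlow
    rw [← add_sub_cancel (lpC.X ^ ((m + 1) * s) * E ^ (m + 1)) (aeval _ P), add_sub_assoc]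
    refine add_mem (supportedOn_mono (Set.Iic_subset_Iio.2 (by omega)) hconst)
      (supportedOn_mono (Set.Iic_subset_Iio.2 ?_) hlow)
    linarith

end ApproximateRoot

section Blocks

theorem X_pow_mul_mem_supportedOn_Icc {p : ℕ} (N : ℕ) {x : lpC 1}
    (hx : x ∈ supportedOn (Set.Iic p)) :
    lpC.X ^ N * x ∈ supportedOn (Set.Icc N (N + p)) := by
  have h := mul_mem_supportedOn (X_pow_mem_supportedOn N) hx
  refine supportedOn_mono ?_ h
  simp [← Set.Icc_bot, Set.singleton_add]

variable {V : ℕ → lpC 1} {p g : ℕ}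

theorem sum_X_pow_mul_mem_supportedOn_Icc (hpg : p ≤ g) (hV : ∀ i, V i ∈ supportedOn (Set.Iic p))
    (c i j : ℕ) :
    ∑ k ∈ Ico i j, lpC.X ^ (c + k * g) * V k ∈ supportedOn (Set.Icc (c + i * g) (c + j * g)) := by
  refine Submodule.sum_mem _ fun k hk => ?_
  obtain ⟨hik, hkj⟩ := mem_Ico.1 hk
  refine supportedOn_mono (Set.Icc_subset_Icc ?_ ?_) (X_pow_mul_mem_supportedOn_Icc _ (hV k))
  · gcongr
  · nlinarith

theorem norm_sum_X_pow_mul_le {η : ℝ} (hη : ∀ i, ‖V i‖ ≤ η) {s : Finset ℕ} {J : ℕ}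
    (hs : #s ≤ J) (e : ℕ → ℕ) : ‖∑ k ∈ s, lpC.X ^ e k * V k‖ ≤ J * η := by
  refine (norm_sum_le_of_le s fun k _ => (norm_X_pow_mul_le (e k) (V k)).trans (hη k)).trans ?_
  rw [sum_const, nsmul_eq_mul]
  gcongr
  exact (norm_nonneg _).trans (hη 0)

theorem exists_sum_X_pow_mul_eq_add (hpg : p < g) (hV : ∀ i, V i ∈ supportedOn (Set.Iic p))
    {η : ℝ} (hη : ∀ i, ‖V i‖ ≤ η) (c : ℕ) {j J : ℕ} (hj : j < J) :
    ∃ low ∈ supportedOn (Set.Iio (c + j * g)), ∃ high ∈ supportedOn (Set.Ici (c + j * g + g)),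
      ‖high‖ ≤ J * η ∧ ∑ k ∈ range J, lpC.X ^ (c + k * g) * V k =
        low + lpC.X ^ (c + j * g) * V j + high := by
  refine ⟨∑ k ∈ range j, lpC.X ^ (c + k * g) * V k, ?_,
    ∑ k ∈ Ico (j + 1) J, lpC.X ^ (c + k * g) * V k, ?_, ?_, ?_⟩
  · refine Submodule.sum_mem _ fun k hk => supportedOn_mono (fun n hn => ?_)
      (X_pow_mul_mem_supportedOn_Icc _ (hV k))
    have hkj : k + 1 ≤ j := mem_range.1 hk
    have := hn.2
    rw [Set.mem_Iio]
    nlinarith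
  · refine supportedOn_mono ?_ (sum_X_pow_mul_mem_supportedOn_Icc hpg.le hV c (j + 1) J)
    rw [add_one_mul, ← add_assoc]
    exact Set.Icc_subset_Ici_self
  · exact norm_sum_X_pow_mul_le hη (by simp) _
  · rw [← sum_range_succ, sum_range_add_sum_Ico _ hj]

end Blocks

section Simultaneous

open Polynomial

theorem norm_harmonicShift_pow_sub_le {a : ℝ} (ha : 0 ≤ a) {n : ℕ} (han : a ≤ n) {N g : ℕ}
    (hg : 0 < g) {f x h : lpC 1} (hf : f - (x + h) ∈ supportedOn (Set.Iio N))
    (hh : h ∈ supportedOn (Set.Ici (N + g))) (v : lpC 1) :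
    ‖(harmonicShift a ^ N) f - v‖ ≤
      ‖(harmonicShift a ^ N) x - v‖ + (1 + N / g : ℝ) ^ n * ‖h‖ := by
  have hfx : (harmonicShift a ^ N) f = (harmonicShift a ^ N) x + (harmonicShift a ^ N) h := by
    rw [← map_add, ← sub_eq_zero, ← map_sub, harmonicShift_pow_eq_zero a hf]
  rw [hfx, add_sub_right_comm]
  exact (norm_add_le _ _).trans
    (add_le_add_right (norm_harmonicShift_pow_apply_le ha han hg hh) _)

/-- The time at which the `j`-th of `J` parameters is approximated. It is the position, in the
`M`-th power of `u₀ + X ^ s * (ε + c Y)` with `s = 4 M J g`, of the `j`-th block of `Y`; the blocks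
of `Y` are `g` apart and start at `2 J g`, so that products of two of them come after all blocks. -/
def hittingTime (M J g j : ℕ) : ℕ := M * (4 * M * J * g) + 2 * J * g + j * g

theorem le_hittingTime (M : ℕ) {J : ℕ} (hJ : 0 < J) (g j : ℕ) : g ≤ hittingTime M J g j := by
  rw [hittingTime]
  nlinarith [Nat.zero_le (M * (4 * M * J * g)), Nat.zero_le (j * g)]

theorem hittingTime_le {M J g j : ℕ} (hj : j < J) :
    hittingTime M J g j ≤ (4 * M ^ 2 + 3) * (J * g) := by
  rw [hittingTime]
  nlinarith [Nat.mul_le_mul_right g hj.le]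

theorem exists_aeval_sub_X_pow_mul_mem_supportedOn {m p J g : ℕ} (hJ : 0 < J) (hpg : p < g)
    {u₀ : lpC 1} (hu₀ : u₀ ∈ supportedOn (Set.Iic p)) {V : ℕ → lpC 1}
    (hV : ∀ j, V j ∈ supportedOn (Set.Iic p)) {ε η : ℝ} (hε : 0 < ε) (hε' : ε ≤ 1 / 2)
    (hη : ∀ j, ‖V j‖ ≤ η) (hsmall : J * η ≤ ε ^ (m + 1)) :
    ∃ u : lpC 1, ‖u - u₀‖ ≤ 2 * ε ∧ ∀ j < J,
      ∃ h ∈ supportedOn (Set.Ici (hittingTime (m + 1) J g j + g)), ‖h‖ ≤ 3 * (J * η / ε ^ m) ∧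
        ∀ P : ℂ[X], P.Monic → P.natDegree = m + 1 →
          aeval u P - (lpC.X ^ hittingTime (m + 1) J g j * V j + h) ∈
            supportedOn (Set.Iio (hittingTime (m + 1) J g j)) := by
  set Y : lpC 1 := ∑ k ∈ range J, lpC.X ^ (2 * J * g + k * g) * V k with hYdef
  have hY : Y ∈ supportedOn (Set.Icc (2 * J * g) (2 * J * g + J * g)) := by
    simpa using sum_X_pow_mul_mem_supportedOn_Icc hpg.le hV (2 * J * g) 0 J
  have hYnorm : ‖Y‖ ≤ J * η := norm_sum_X_pow_mul_le hη (by simp) _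
  have hg : 0 < g := p.zero_le.trans_lt hpg
  have hpJ : p ≤ J * g := hpg.le.trans (Nat.le_mul_of_pos_left g hJ)
  obtain ⟨u, R, hu, hR, hRnorm, hP⟩ := exists_aeval_sub_mem_supportedOn (m := m)
    (s := 4 * (m + 1) * J * g) (by positivity) (by nlinarith) hε hε' hu₀ hY (hYnorm.trans hsmall)
  refine ⟨u, hu, fun j hj => ?_⟩
  obtain ⟨low, hlow, high, hhigh, hhighnorm, hsum⟩ := exists_sum_X_pow_mul_eq_add hpg hV hη
    ((m + 1) * (4 * (m + 1) * J * g) + 2 * J * g) hj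
  refine ⟨high + R, add_mem hhigh (supportedOn_mono (Set.Ici_subset_Ici.2 ?_) hR), ?_,
    fun P hmonic hdeg => ?_⟩
  · rw [hittingTime]
    nlinarith
  · have hpow : J * η ≤ J * η / ε ^ m :=
      le_div_self ((norm_nonneg Y).trans hYnorm) (by positivity)
        (pow_le_one₀ hε.le (by linarith))
    have hRnorm' : ‖R‖ ≤ 2 * (J * η / ε ^ m) := hRnorm.trans (by gcongr)
    linarith [norm_add_le high R]
  · have hXY : lpC.X ^ ((m + 1) * (4 * (m + 1) * J * g)) * Y =
        low + lpC.X ^ hittingTime (m + 1) J g j * V j + high := by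
      rw [hittingTime, ← hsum, hYdef, mul_sum]
      simp only [← mul_assoc, ← pow_add, add_assoc]
    have hsplit : aeval u P - (lpC.X ^ hittingTime (m + 1) J g j * V j + (high + R)) =
        aeval u P - (lpC.X ^ ((m + 1) * (4 * (m + 1) * J * g)) * Y + R) + low := by
      rw [hXY]
      ring
    rw [hsplit]
    exact add_mem (supportedOn_mono (Set.Iio_subset_Iio (Nat.le_add_right _ _))
      (hP P hmonic hdeg)) hlow

theorem exists_norm_harmonicShift_pow_aeval_sub_le {m p n J g : ℕ} (hJ : 0 < J) (hpg : p < g)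
    {u₀ v : lpC 1} (hu₀ : u₀ ∈ supportedOn (Set.Iic p)) (hv : v ∈ supportedOn (Set.Iic p))
    {ε Q : ℝ} (hε : 0 < ε) (hε' : ε ≤ 1 / 2) (hQ : 0 < Q) (hQg : (p + 1) * Q ^ n ≤ g)
    (hsmall : J * (‖v‖ / Q) ≤ ε ^ (m + 1)) {μ : ℕ → ℝ} (hμ : ∀ j, 0 ≤ μ j)
    (hnμ : ∀ j, 1 ≤ n * μ j) :
    ∃ u : lpC 1, ‖u - u₀‖ ≤ 2 * ε ∧ ∀ j < J, ∀ a : ℝ, 0 ≤ a → a ≤ n →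
      ∀ P : ℂ[X], P.Monic → P.natDegree = m + 1 →
        ‖(harmonicShift a ^ hittingTime (m + 1) J g j) (aeval u P) - v‖ ≤
          (Real.exp (|a - μ j| * (1 + Real.log (hittingTime (m + 1) J g j))) - 1) * ‖v‖ +
          (1 + hittingTime (m + 1) J g j / g : ℝ) ^ n * (3 * (J * (‖v‖ / Q) / ε ^ m)) := by
  have hV (j : ℕ) := exists_norm_harmonicShift_pow_X_pow_mul_sub_le (hμ j) (hnμ j) hQ
    (hQg.trans (mod_cast le_hittingTime (m + 1) hJ g j)) hv
  choose V hVsupp hVnorm hVapprox using hV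
  obtain ⟨u, hu, hblock⟩ :=
    exists_aeval_sub_X_pow_mul_mem_supportedOn hJ hpg hu₀ hVsupp hε hε' hVnorm hsmall
  refine ⟨u, hu, fun j hj a ha han P hmonic hdeg => ?_⟩
  obtain ⟨h, hh, hhnorm, hP⟩ := hblock j hj
  refine (norm_harmonicShift_pow_sub_le ha han (p.zero_le.trans_lt hpg) (hP P hmonic hdeg) hh
    v).trans ?_
  gcongr
  exact hVapprox j a

end Simultaneous

section Asymptotics

open Filter Topology Polynomial

theorem tendsto_div_mul_one_add_log (r C D : ℝ) :
    Tendsto (fun q : ℕ => r / q * (1 + (C + D * Real.log q))) atTop (𝓝 0) := by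
  have hinv : Tendsto (fun q : ℕ => 1 / (q : ℝ)) atTop (𝓝 0) := tendsto_one_div_atTop_nhds_zero_nat
  have hlog : Tendsto (fun q : ℕ => Real.log q / (q : ℝ)) atTop (𝓝 0) := by
    simpa [Function.comp_def] using (Real.tendsto_pow_log_div_mul_add_atTop 1 0 1 one_ne_zero).comp
      (tendsto_natCast_atTop_atTop (R := ℝ))
  convert (hinv.const_mul (r * (1 + C))).add (hlog.const_mul (r * D)) using 2
  · ring
  · simp

/-- The spacing of the blocks when `q ^ d` parameters are treated simultaneously, chosen so that
blocks divided by `q ^ (d * (n + 1) + 1)` can be used for all parameters in `[1 / n, n]`. -/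
def blockGap (p d n q : ℕ) : ℕ := (p + 1) * q ^ (n * (d * (n + 1) + 1))

theorem lt_blockGap (p d n : ℕ) {q : ℕ} (hq : 0 < q) : p < blockGap p d n q :=
  Nat.le_mul_of_pos_right _ (Nat.pow_pos hq)

theorem log_hittingTime_le {M p d n q j : ℕ} (hq : 0 < q) (hj : j < q ^ d) :
    Real.log (hittingTime M (q ^ d) (blockGap p d n q) j) ≤ Real.log ((4 * M ^ 2 + 3) * (p + 1)) +
      (d + n * (d * (n + 1) + 1) : ℕ) * Real.log q := by
  have hpos : 0 < hittingTime M (q ^ d) (blockGap p d n q) j :=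
    p.zero_le.trans_lt ((lt_blockGap p d n hq).trans_le (le_hittingTime M (by positivity) _ j))
  have hle : (hittingTime M (q ^ d) (blockGap p d n q) j : ℝ) ≤
      (4 * M ^ 2 + 3) * (q ^ d * ((p + 1) * q ^ (n * (d * (n + 1) + 1)))) :=
    mod_cast hittingTime_le (M := M) (g := blockGap p d n q) hj
  refine (Real.log_le_log (mod_cast hpos) hle).trans_eq ?_
  rw [← Real.log_pow, ← Real.log_mul (by positivity) (by positivity), pow_add]
  congr 1
  ring

theorem one_add_hittingTime_div_le {M J g j : ℕ} (hg : 0 < g) (hj : j < J) :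
    (1 + hittingTime M J g j / g : ℝ) ≤ (4 * M ^ 2 + 4) * J := by
  have hle : (hittingTime M J g j : ℝ) ≤ (4 * M ^ 2 + 3) * (J * g) :=
    mod_cast hittingTime_le (M := M) (g := g) hj
  have hdiv : (hittingTime M J g j / g : ℝ) ≤ (4 * M ^ 2 + 3) * J := by
    rwa [div_le_iff₀ (by positivity), mul_assoc]
  have hJ : (1 : ℝ) ≤ J := mod_cast Nat.one_le_of_lt hj
  linarith

theorem one_add_hittingTime_div_pow_mul_le {M d n q g j : ℕ} (hq : 0 < q) (hg : 0 < g)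
    (hj : j < q ^ d) {x : ℝ} (hx : 0 ≤ x) :
    (1 + hittingTime M (q ^ d) g j / g : ℝ) ^ n * ((q ^ d : ℕ) * (x / q ^ (d * (n + 1) + 1))) ≤
      (4 * M ^ 2 + 4) ^ n * x * (1 / q) := by
  calc _ ≤ ((4 * M ^ 2 + 4) * (q ^ d : ℕ) : ℝ) ^ n *
        ((q ^ d : ℕ) * (x / q ^ (d * (n + 1) + 1))) := by
        gcongr
        exact one_add_hittingTime_div_le hg hj
    _ = (4 * M ^ 2 + 4) ^ n * x * (1 / q) := by
        rw [mul_pow, Nat.cast_pow, ← pow_mul, mul_add_one d n, pow_succ, pow_add]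
        field_simp
        ring

theorem pow_mul_div_pow_succ_le {d e : ℕ} (hde : d ≤ e) {q x : ℝ} (hq : 1 ≤ q) (hx : 0 ≤ x) :
    q ^ d * (x / q ^ (e + 1)) ≤ x * (1 / q) := by
  rw [mul_one_div, mul_div_assoc', div_le_div_iff₀ (by positivity) (by positivity), pow_succ,
    mul_comm _ x, mul_assoc]
  gcongr

theorem tendsto_approximationError (r C D B K : ℝ) :
    Tendsto (fun q : ℕ => (Real.exp (r / q * (1 + (C + D * Real.log q))) - 1) * B + K * (1 / q))
      atTop (𝓝 0) := by
  have hexp := ((Real.continuous_exp.tendsto 0).comp (tendsto_div_mul_one_add_log r C D)).sub_const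
    1 |>.mul_const B
  simpa [Function.comp_def] using hexp.add (tendsto_one_div_atTop_nhds_zero_nat.const_mul K)

theorem approximationError_le {M p n d q j : ℕ} (hq : 0 < q) (hj : j < q ^ d) {t B c : ℝ}
    (ht : t ≤ n / q) (hB : 0 ≤ B) (hc : 0 ≤ c) :
    (Real.exp (t * (1 + Real.log (hittingTime M (q ^ d) (blockGap p d n q) j))) - 1) * B +
        (1 + hittingTime M (q ^ d) (blockGap p d n q) j / (blockGap p d n q : ℝ)) ^ n *
          (3 * ((q ^ d : ℕ) * (B / q ^ (d * (n + 1) + 1)) / c)) ≤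
      (Real.exp (n / q * (1 + (Real.log ((4 * M ^ 2 + 3) * (p + 1)) +
        (d + n * (d * (n + 1) + 1) : ℕ) * Real.log q))) - 1) * B +
        (4 * M ^ 2 + 4) ^ n * B * (3 / c) * (1 / q) := by
  refine add_le_add ?_ ?_
  · have hlog := log_hittingTime_le (M := M) (p := p) (n := n) hq hj
    have : 0 ≤ Real.log (hittingTime M (q ^ d) (blockGap p d n q) j) :=
      Real.log_natCast_nonneg _
    gcongr
  · have htail := one_add_hittingTime_div_pow_mul_le (M := M) (n := n) hq
      (p.zero_le.trans_lt (lt_blockGap p d n hq)) hj hB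
    calc _ = (1 + hittingTime M (q ^ d) (blockGap p d n q) j / (blockGap p d n q : ℝ)) ^ n *
          ((q ^ d : ℕ) * (B / q ^ (d * (n + 1) + 1))) * (3 / c) := by ring
      _ ≤ (4 * M ^ 2 + 4) ^ n * B * (1 / q) * (3 / c) := by gcongr
      _ = (4 * M ^ 2 + 4) ^ n * B * (3 / c) * (1 / q) := by ring

theorem eventually_exists_norm_harmonicShift_pow_aeval_sub_lt {m p : ℕ} (n d : ℕ) {u₀ v : lpC 1}
    (hu₀ : u₀ ∈ supportedOn (Set.Iic p)) (hv : v ∈ supportedOn (Set.Iic p)) {ε δ : ℝ} (hε : 0 < ε)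
    (hδ : 0 < δ) : ∀ᶠ q : ℕ in atTop, ∀ μ : ℕ → ℝ, (∀ j, 0 ≤ μ j) → (∀ j, 1 ≤ n * μ j) →
      ∃ u : lpC 1, ‖u - u₀‖ < ε ∧ ∀ j < q ^ d, ∀ a : ℝ, 0 ≤ a → a ≤ n → |a - μ j| ≤ n / q →
        ∀ P : ℂ[X], P.Monic → P.natDegree = m + 1 →
          ‖(harmonicShift a ^ hittingTime (m + 1) (q ^ d) (blockGap p d n q) j) (aeval u P) - v‖ <
            δ := by
  set e : ℝ := min (ε / 3) (1 / 2)
  have he : 0 < e := by positivity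
  have herror := (tendsto_approximationError n (Real.log ((4 * (m + 1 : ℕ) ^ 2 + 3) * (p + 1)))
    (d + n * (d * (n + 1) + 1) : ℕ) ‖v‖
    ((4 * (m + 1 : ℕ) ^ 2 + 4) ^ n * ‖v‖ * (3 / e ^ m))).eventually_lt_const hδ
  have hsmall : ∀ᶠ q : ℕ in atTop, ‖v‖ * (1 / (q : ℝ)) < e ^ (m + 1) := by
    have htendsto := (tendsto_one_div_atTop_nhds_zero_nat (𝕜 := ℝ)).const_mul ‖v‖
    rw [mul_zero] at htendsto
    exact htendsto.eventually_lt_const (by positivity)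
  filter_upwards [herror, hsmall, eventually_gt_atTop 0] with q hqerror hqsmall hq μ hμ hnμ
  have hQg : (p + 1 : ℝ) * (q ^ (d * (n + 1) + 1)) ^ n ≤ blockGap p d n q := by
    rw [blockGap, ← pow_mul, mul_comm _ n]
    push_cast
    rfl
  have hsmallq : (q ^ d : ℕ) * (‖v‖ / (q : ℝ) ^ (d * (n + 1) + 1)) ≤ e ^ (m + 1) := by
    rw [Nat.cast_pow]
    exact (pow_mul_div_pow_succ_le (Nat.le_mul_of_pos_right d n.succ_pos) (mod_cast hq)
      (norm_nonneg v)).trans hqsmall.le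
  obtain ⟨u, hu, happrox⟩ := exists_norm_harmonicShift_pow_aeval_sub_le (Nat.pow_pos hq)
    (lt_blockGap p d n hq) hu₀ hv he (min_le_right _ _) (by positivity) hQg hsmallq hμ hnμ
  refine ⟨u, by linarith [min_le_left (ε / 3) (1 / 2)], fun j hj a ha han haμ P hP hdeg => ?_⟩
  refine (happrox j hj a ha han P hP hdeg).trans_lt (lt_of_le_of_lt ?_ hqerror)
  exact approximationError_le hq hj haμ (norm_nonneg v) (by positivity)

end Asymptotics

section Grid

theorem exists_abs_sub_add_mul_div_le {α β a : ℝ} (ha : a ∈ Set.Ico α β) {q : ℕ} (hq : 0 < q) :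
    ∃ t : Fin q, |a - (α + (β - α) * t / q)| ≤ (β - α) / q := by
  have hq' : (0 : ℝ) < q := mod_cast hq
  have hαβ : 0 < β - α := sub_pos.2 (ha.1.trans_lt ha.2)
  set x : ℝ := (a - α) * q / (β - α) with hx
  have hx₀ : 0 ≤ x := div_nonneg (mul_nonneg (sub_nonneg.2 ha.1) hq'.le) hαβ.le
  have hxq : x < q := by
    rw [hx, div_lt_iff₀ hαβ, mul_comm]
    gcongr
    exact ha.2
  refine ⟨⟨⌊x⌋₊, (Nat.floor_lt hx₀).2 hxq⟩, ?_⟩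
  have hdiff : a - (α + (β - α) * ⌊x⌋₊ / q) = (x - ⌊x⌋₊) * ((β - α) / q) := by
    rw [hx]
    field_simp
    ring
  rw [hdiff, abs_mul, abs_of_pos (div_pos hαβ hq')]
  refine mul_le_of_le_one_left (by positivity) ?_
  rw [abs_of_nonneg (sub_nonneg.2 (Nat.floor_le hx₀))]
  linarith [Nat.lt_floor_add_one x]

/-- The `j`-th grid point has coordinates given by the base-`q` digits of `j`. -/
theorem exists_grid (d : ℕ) {α β : ℝ} (hαβ : α ≤ β) {q : ℕ} (hq : 0 < q) :
    ∃ μ : Fin d → ℕ → ℝ, (∀ i j, α ≤ μ i j) ∧ ∀ lam : Fin d → ℝ, (∀ i, lam i ∈ Set.Ico α β) →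
      ∃ j < q ^ d, ∀ i, |lam i - μ i j| ≤ (β - α) / q := by
  refine ⟨fun i j => α + (β - α) * (j / q ^ (i : ℕ) % q : ℕ) / q, fun i j => ?_, fun lam hlam => ?_⟩
  · have : 0 ≤ β - α := sub_nonneg.2 hαβ
    exact le_add_of_nonneg_right (by positivity)
  · choose t ht using fun i => exists_abs_sub_add_mul_div_le (hlam i) hq
    refine ⟨finFunctionFinEquiv t, Fin.is_lt _, fun i => ?_⟩
    have hdigit : (finFunctionFinEquiv t : ℕ) / q ^ (i : ℕ) % q = t i :=
      congrArg Fin.val (congrFun (finFunctionFinEquiv.symm_apply_apply t) i)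
    simpa only [hdigit] using ht i

end Grid

section ProductShift

open Polynomial

variable {d : ℕ} {T : (Fin d → lpC 1) →L[ℂ] (Fin d → lpC 1)} {lam : Fin d → ℝ}

theorem isProductShift_harmonicWeight_apply (hT : IsProductShift 1 d harmonicWeight T lam)
    (x : Fin d → lpC 1) (i : Fin d) : T x i = harmonicShift (lam i) (x i) :=
  lp.ext (funext (hT x i))

theorem isProductShift_harmonicWeight_pow_apply (hT : IsProductShift 1 d harmonicWeight T lam)
    (N : ℕ) (x : Fin d → lpC 1) (i : Fin d) : (T ^ N) x i = (harmonicShift (lam i) ^ N) (x i) := by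
  induction N generalizing x with
  | zero => rfl
  | succ N ih =>
    rw [pow_succ, pow_succ, mul_apply_eq_comp, mul_apply_eq_comp, ih,
      isProductShift_harmonicWeight_apply hT]

theorem norm_isProductShift_harmonicWeight_le (hT : IsProductShift 1 d harmonicWeight T lam) {r : ℝ}
    (hr : 0 ≤ r) (hlam : ∀ i, |lam i| ≤ r) : ‖T‖ ≤ 1 + r := by
  refine T.opNorm_le_bound (by positivity) fun x => ?_
  refine (pi_norm_le_iff_of_nonneg (by positivity)).2 fun i => ?_
  rw [isProductShift_harmonicWeight_apply hT]
  exact (harmonicShift (lam i)).le_of_opNorm_le_of_le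
    ((norm_harmonicShift_le _).trans (by gcongr; exact hlam i)) (norm_le_pi_norm x i)

end ProductShift

section Density

open Polynomial Filter

variable {d m : ℕ} {α β ε δ : ℝ}

theorem exists_finset_forall_norm_harmonicShift_pow_aeval_sub_lt {p : ℕ} (hα : 0 < α) (hαβ : α ≤ β)
    {u₀ v : Fin d → lpC 1} (hu₀ : ∀ i, u₀ i ∈ supportedOn (Set.Iic p))
    (hv : ∀ i, v i ∈ supportedOn (Set.Iic p)) (hε : 0 < ε) (hδ : 0 < δ) :
    ∃ u : Fin d → lpC 1, dist u u₀ < ε ∧ ∃ F : Finset ℕ,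
      ∀ lam : Fin d → ℝ, (∀ i, lam i ∈ Set.Ico α β) →
        ∀ P : ℂ[X], P.Monic → P.natDegree = m + 1 → ∃ N ∈ F, ∀ i,
          ‖(harmonicShift (lam i) ^ (N + 1)) (aeval (u i) P) - v i‖ < δ := by
  obtain ⟨n, hn⟩ := exists_nat_ge (max (1 / α) β)
  have hnα : 1 ≤ n * α := (div_le_iff₀ hα).1 ((le_max_left _ _).trans hn)
  have hβn : β ≤ n := (le_max_right _ _).trans hn
  obtain ⟨q, hq, hnear⟩ := ((eventually_gt_atTop 0).and (eventually_all.2 fun i =>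
    eventually_exists_norm_harmonicShift_pow_aeval_sub_lt (m := m) n d (hu₀ i) (hv i)
      hε hδ)).exists
  obtain ⟨μ, hαμ, hμ⟩ := exists_grid d hαβ hq
  choose u hu happrox using fun i => hnear i (μ i) (fun j => hα.le.trans (hαμ i j))
    (fun j => hnα.trans (by gcongr; exact hαμ i j))
  let N (j : ℕ) : ℕ := hittingTime (m + 1) (q ^ d) (blockGap p d n q) j
  refine ⟨u, (dist_pi_lt_iff hε).2 fun i => (dist_eq_norm _ _).trans_lt (hu i),
    (range (q ^ d)).image (N · - 1), fun lam hlam P hP hdeg => ?_⟩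
  obtain ⟨j, hj, hclose⟩ := hμ lam hlam
  refine ⟨N j - 1, mem_image_of_mem _ (mem_range.2 hj), fun i => ?_⟩
  have hN : 0 < N j := p.zero_le.trans_lt
    ((lt_blockGap p d n hq).trans_le (le_hittingTime _ (Nat.pow_pos hq) _ j))
  rw [Nat.sub_add_cancel hN]
  refine happrox i j hj (lam i) (hα.le.trans (hlam i).1) ((hlam i).2.le.trans hβn)
    ((hclose i).trans ?_) P hP hdeg
  gcongr
  linarith

theorem dense_setOf_exists_finset_dist_pow_aeval_lt {T : (Fin d → ℝ) →
    ((Fin d → lpC 1) →L[ℂ] (Fin d → lpC 1))} (hα : 0 < α) (hαβ : α ≤ β)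
    (hT : ∀ lam, (∀ i, lam i ∈ Set.Ico α β) → IsProductShift 1 d harmonicWeight (T lam) lam)
    (v : Fin d → lpC 1) (hδ : 0 < δ) :
    Dense {u | ∃ F : Finset ℕ, ∀ lam, (∀ i, lam i ∈ Set.Ico α β) → ∀ P : ℂ[X], P.Monic →
      P.natDegree = m + 1 → ∃ N ∈ F, dist ((T lam ^ (N + 1)) (aeval u P)) v < δ} := by
  refine fun x => Metric.mem_closure_iff.2 fun ε hε => ?_
  obtain ⟨p, u₀, v', hu₀, hv', hx, hv⟩ := exists_pi_mem_supportedOn_dist_lt x v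
    (show 0 < min (ε / 2) (δ / 2) by positivity)
  obtain ⟨u, hu, F, hF⟩ := exists_finset_forall_norm_harmonicShift_pow_aeval_sub_lt (m := m)
    hα hαβ hu₀ hv' (half_pos hε) (half_pos hδ)
  refine ⟨u, ⟨F, fun lam hlam P hP hdeg => ?_⟩, ?_⟩
  · obtain ⟨N, hN, hlt⟩ := hF lam hlam P hP hdeg
    have hdist : dist ((T lam ^ (N + 1)) (aeval u P)) v' < δ / 2 := by
      refine (dist_pi_lt_iff (half_pos hδ)).2 fun i => ?_
      rw [isProductShift_harmonicWeight_pow_apply (hT lam hlam), dist_eq_norm,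
        aeval_pi_apply₂]
      exact hlt i
    refine ⟨N, hN, (dist_triangle _ v' _).trans_lt ?_⟩
    linarith [min_le_right (ε / 2) (δ / 2)]
  · rw [dist_comm]
    linarith [dist_triangle u u₀ x, min_le_left (ε / 2) (δ / 2)]

end Density

section Algebra

open Polynomial

theorem exists_nat_forall_mem_Ico {ι : Type*} [Finite ι] {lam : ι → ℝ} (hlam : ∀ i, 0 < lam i) :
    ∃ n : ℕ, ∀ i, lam i ∈ Set.Ico (1 / (n + 1) : ℝ) (n + 1) := by
  have hlarge (i : ι) : ∀ᶠ n : ℕ in Filter.atTop, lam i ∈ Set.Ico (1 / (n + 1) : ℝ) (n + 1) := by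
    filter_upwards [tendsto_one_div_add_atTop_nhds_zero_nat.eventually_le_const (hlam i),
      tendsto_natCast_atTop_atTop.eventually_ge_atTop (lam i)] with n hinv hn
    exact ⟨hinv, hn.trans_lt (lt_add_one _)⟩
  exact (Filter.eventually_all.2 hlarge).exists

theorem exists_forall_denseRange_isProductShift_pow_aeval {d : ℕ}
    {T : (Fin d → ℝ) → ((Fin d → lpC 1) →L[ℂ] (Fin d → lpC 1))}
    (hT : ∀ lam, (∀ i, 0 < lam i) → IsProductShift 1 d harmonicWeight (T lam) lam) :
    ∃ u : Fin d → lpC 1, ∀ lam : Fin d → ℝ, (∀ i, 0 < lam i) → ∀ P : ℂ[X], 0 < P.natDegree →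
      DenseRange fun N : ℕ => (T lam ^ (N + 1)) (aeval u P) := by
  let K (n : ℕ) : Set (Fin d → ℝ) := {lam | ∀ i, lam i ∈ Set.Ico (1 / (n + 1) : ℝ) (n + 1)}
  have hK (n : ℕ) : ∀ lam ∈ K n, IsProductShift 1 d harmonicWeight (T lam) lam :=
    fun lam hlam => hT lam fun i => Nat.one_div_pos_of_nat.trans_le (hlam i).1
  have hbdd (n : ℕ) : ∃ C, ∀ lam ∈ K n, ‖T lam‖ ≤ C :=
    ⟨1 + (n + 1), fun lam hlam =>
      norm_isProductShift_harmonicWeight_le (hK n lam hlam) (by positivity) fun i => by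
        rw [abs_of_pos (Nat.one_div_pos_of_nat.trans_le (hlam i).1)]
        exact (hlam i).2.le⟩
  obtain ⟨u, hu⟩ := exists_forall_denseRange_pow_aeval (𝕜 := ℂ) T K hbdd fun n m v δ hδ =>
    dense_setOf_exists_finset_dist_pow_aeval_lt Nat.one_div_pos_of_nat (by
      rw [div_le_iff₀ (by positivity)]
      nlinarith [n.cast_nonneg (α := ℝ)]) (hK n) v hδ
  refine ⟨u, fun lam hlam P hP => ?_⟩
  obtain ⟨n, hn⟩ := exists_nat_forall_mem_Ico hlam
  exact hu n lam hn P hP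

theorem commonHypercyclicAlgebraConv_of_forall_denseRange {d : ℕ} (hd : 1 ≤ d)
    {S : Set (Fin d → ℝ)} (hS : S.Nonempty)
    {T : (Fin d → ℝ) → ((Fin d → lpC 1) →L[ℂ] (Fin d → lpC 1))} (u : Fin d → lpC 1)
    (hu : ∀ lam ∈ S, ∀ P : ℂ[X], 0 < P.natDegree →
      DenseRange fun N : ℕ => (T lam ^ (N + 1)) (aeval u P)) :
    CommonHypercyclicAlgebraConv d S T := by
  refine ⟨{x | ∃ P : ℂ[X], P.coeff 0 = 0 ∧ aeval u P = x}, ⟨0, by simp, by simp⟩, ?_, ?_, ?_,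
    ⟨u, ⟨X, by simp, by simp⟩, ?_⟩, ?_⟩
  · rintro _ ⟨P, hP, rfl⟩ _ ⟨Q, hQ, rfl⟩
    exact ⟨P + Q, by simp [hP, hQ], map_add _ _ _⟩
  · rintro c _ ⟨P, hP, rfl⟩
    exact ⟨c • P, by simp [hP], map_smul _ _ _⟩
  · rintro _ ⟨P, hP, rfl⟩ _ ⟨Q, -, rfl⟩
    refine ⟨_, ⟨P * Q, by simp [mul_coeff_zero, hP], rfl⟩, fun i n => ?_⟩
    rw [map_mul, Pi.mul_apply, mul_apply, Nat.sum_antidiagonal_eq_sum_range_succ_mk]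
  · rintro rfl
    obtain ⟨lam, hlam⟩ := hS
    have : Nonempty (Fin d) := ⟨⟨0, hd⟩⟩
    have : Nontrivial (lpC 1) := NormOneClass.nontrivial
    have hX : DenseRange fun _ : ℕ => (0 : Fin d → lpC 1) := by
      simpa only [aeval_X, map_zero] using hu lam hlam X (by simp)
    obtain ⟨y, hy⟩ := exists_ne (0 : Fin d → lpC 1)
    obtain ⟨-, hlt⟩ := hX.exists_dist_lt y (norm_pos_iff.2 hy)
    exact hlt.ne (dist_zero_right y)
  · rintro _ ⟨P, hP, rfl⟩ hne lam hlam
    refine hu lam hlam P (Nat.pos_of_ne_zero fun hdeg => hne ?_)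
    rw [eq_C_of_natDegree_eq_zero hdeg, hP, C_0, map_zero]

end Algebra

end lpC

/-- Theorem 1.4 of the paper, for the weights `w n (a) = 1 + a / n`. -/
theorem stmt_5 (d : ℕ) (hd : 1 ≤ d)
    (T : (Fin d → ℝ) → ((Fin d → lpC 1) →L[ℂ] (Fin d → lpC 1)))
    (hT : ∀ lam : Fin d → ℝ, (∀ i, 0 < lam i) →
      IsProductShift 1 d (fun a n => 1 + a / (n : ℝ)) (T lam) lam) :
    CommonHypercyclicAlgebraConv d {lam | ∀ i, 0 < lam i} T := by
  obtain ⟨u, hu⟩ := lpC.exists_forall_denseRange_isProductShift_pow_aeval hT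
  have hne : {lam : Fin d → ℝ | ∀ i, 0 < lam i}.Nonempty := ⟨1, fun _ => one_pos⟩
  exact lpC.commonHypercyclicAlgebraConv_of_forall_denseRange hd hne u hu
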